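/- arXiv:1902.04894 — 8 statements merged into one kernel-verified Lean document; each statement's English description precedes it below -/
import Mathlib

section
/- Let f : [0,∞) → ℝ be a superquadratic function, let μ be a probability measure on a measurable space S, and let φ : S → [0,∞) be a nonnegative μ-integrable function. Then f(∫ φ dμ) ≤ ∫ [ f(φ(s)) − f(|φ(s) − ∫ φ dμ|) ] dμ(s). -/
open MeasureTheory

/-- A function `f : [0,∞) → ℝ` is superquadratic if for every `x ≥ 0` there exists a
constant `C_x ∈ ℝ` such that `f(t) ≥ f(x) + C_x (t − x) + f(|t − x|)` for all `t ≥ 0`. -/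
def Superquadratic (f : ℝ → ℝ) : Prop :=
  ∀ x : ℝ, 0 ≤ x → ∃ C : ℝ, ∀ t : ℝ, 0 ≤ t → f x + C * (t - x) + f |t - x| ≤ f t

section SupportingFunctional

variable {S E : Type*} [MeasurableSpace S] {μ : Measure S} [IsProbabilityMeasure μ]
  [NormedAddCommGroup E] [NormedSpace ℝ E] [CompleteSpace E] {φ : S → E}

theorem integral_const_add_clm_sub_integral (hφ : Integrable φ μ) (L : E →L[ℝ] ℝ) (c : ℝ) :
    ∫ s, (c + L (φ s - ∫ s', φ s' ∂μ)) ∂μ = c := by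
  have hdev : Integrable (fun s => φ s - ∫ s', φ s' ∂μ) μ := hφ.sub (integrable_const _)
  have hmean : ∫ s, (φ s - ∫ s', φ s' ∂μ) ∂μ = 0 := by
    simpa only [average_eq_integral] using integral_sub_average μ φ
  calc ∫ s, (c + L (φ s - ∫ s', φ s' ∂μ)) ∂μ
      = ∫ _, c ∂μ + ∫ s, L (φ s - ∫ s', φ s' ∂μ) ∂μ :=
        integral_add (integrable_const c) (L.integrable_comp hdev)
    _ = c + L (∫ s, (φ s - ∫ s', φ s' ∂μ) ∂μ) := by
        rw [integral_const, probReal_univ, one_smul, L.integral_comp_comm hdev]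
    _ = c := by rw [hmean, map_zero, add_zero]

theorem le_integral_of_ae_const_add_clm_sub_integral_le {g : S → ℝ} (hφ : Integrable φ μ)
    (hg : Integrable g μ) (L : E →L[ℝ] ℝ) {c : ℝ}
    (hle : ∀ᵐ s ∂μ, c + L (φ s - ∫ s', φ s' ∂μ) ≤ g s) : c ≤ ∫ s, g s ∂μ := by
  have hdev : Integrable (fun s => φ s - ∫ s', φ s' ∂μ) μ := hφ.sub (integrable_const _)
  calc c = ∫ s, (c + L (φ s - ∫ s', φ s' ∂μ)) ∂μ :=
        (integral_const_add_clm_sub_integral hφ L c).symm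
    _ ≤ ∫ s, g s ∂μ :=
        integral_mono_ae ((integrable_const c).add (L.integrable_comp hdev)) hg hle

end SupportingFunctional

/- For `f x = x ^ 2` and `m = ∫ φ` the integrand is `2 * m * φ s - m ^ 2`, which is integrable even
when `φ ^ 2` is not. -/
theorem superquadratic_jensen_general {S : Type*} [MeasurableSpace S] {μ : Measure S}
    [IsProbabilityMeasure μ] {f : ℝ → ℝ} (hf : Superquadratic f) {φ : S → ℝ}
    (hφ : 0 ≤ᵐ[μ] φ) (hφint : Integrable φ μ)
    (hdiff : Integrable (fun s => f (φ s) - f |φ s - ∫ s', φ s' ∂μ|) μ) :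
    f (∫ s, φ s ∂μ) ≤ ∫ s, (f (φ s) - f |φ s - ∫ s', φ s' ∂μ|) ∂μ := by
  obtain ⟨C, hC⟩ := hf _ (integral_nonneg_of_ae hφ)
  refine le_integral_of_ae_const_add_clm_sub_integral_le hφint hdiff
    (ContinuousLinearMap.mul ℝ ℝ C) ?_
  filter_upwards [hφ] with s hs using le_sub_right_of_add_le (hC (φ s) hs)

/-- If `f` is superquadratic, `μ` is a probability measure and `φ` is a
nonnegative `μ`-integrable function, then
`f(∫ φ dμ) ≤ ∫ [ f(φ(s)) − f(|φ(s) − ∫ φ dμ|) ] dμ(s)`. -/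
theorem superquadratic_jensen {S : Type*} [MeasurableSpace S] (μ : Measure S)
    [IsProbabilityMeasure μ] (f : ℝ → ℝ) (hf : Superquadratic f)
    (φ : S → ℝ) (hφ : ∀ s, 0 ≤ φ s) (hφint : Integrable φ μ)
    (hfφ : Integrable (fun s => f (φ s)) μ)
    (hfabs : Integrable (fun s => f |φ s - ∫ s', φ s' ∂μ|) μ) :
    f (∫ s, φ s ∂μ) ≤ ∫ s, (f (φ s) - f |φ s - ∫ s', φ s' ∂μ|) ∂μ :=
  superquadratic_jensen_general hf (ae_of_all μ hφ) hφint (hfφ.sub hfabs)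
end

section
/- Let f : [0,∞) → ℝ be a superquadratic function that is differentiable (from the right at 0 and at every x > 0) and satisfies f(0) = 0 and f′(0) = 0. Then for every x ≥ 0 the constant C_x in the definition can be taken equal to f′(x); that is, f(t) ≥ f(x) + f′(x)(t − x) + f(|t − x|) for all t ≥ 0 and all x ≥ 0. -/
/-! For `x > 0`, the lower bound `t ↦ f x + C_x (t - x) + f |t - x|` touches `f` at `x` because
`f 0 = 0`. Since `f` has value and derivative `0` at `0`, the term `f |t - x|` is `o(t - x)`, so
that lower bound has derivative `C_x` at `x`. Two functions, one below the other, that touch at `x`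
have equal derivatives there, whence `C_x = f' x`. At `x = 0` both sides equal `f t`. -/

open Filter Set
open scoped Topology

section NormedSpace

variable {E : Type*} [NormedAddCommGroup E] [NormedSpace ℝ E] {x : E}

theorem hasFDerivAt_eq_of_eventuallyLE {f g : E → ℝ} {f' g' : E →L[ℝ] ℝ}
    (hf : HasFDerivAt f f' x) (hg : HasFDerivAt g g' x) (hle : f ≤ᶠ[𝓝 x] g) (heq : f x = g x) :
    f' = g' := by
  have hmin : IsLocalMin (g - f) x := by
    filter_upwards [hle] with y hy
    simpa only [Pi.sub_apply, heq, sub_self, sub_nonneg] using hy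
  exact (sub_eq_zero.mp (hmin.hasFDerivAt_eq_zero (hg.sub hf))).symm

theorem hasFDerivAt_comp_norm_sub {F : Type*} [NormedAddCommGroup F] [NormedSpace ℝ F]
    {φ : ℝ → F} (hφ : HasDerivWithinAt φ 0 (Ici 0) 0) (x : E) :
    HasFDerivAt (fun y ↦ φ ‖y - x‖) (0 : E →L[ℝ] F) x := by
  have hsmall := hφ.isLittleO.comp_tendsto (tendsto_norm_sub_self_nhdsGE x)
  rw [hasFDerivAt_iff_isLittleO]
  simpa [Function.comp_def] using hsmall

theorem hasFDerivAt_eq_of_eventually_add_comp_norm_sub_le {f : E → ℝ} {φ : ℝ → ℝ}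
    {f' L : E →L[ℝ] ℝ} (hf : HasFDerivAt f f' x) (hφ : HasDerivWithinAt φ 0 (Ici 0) 0)
    (hφ0 : φ 0 = 0) (hle : ∀ᶠ y in 𝓝 x, f x + L (y - x) + φ ‖y - x‖ ≤ f y) :
    f' = L := by
  have hlin : HasFDerivAt (fun y ↦ f x + L (y - x)) L x :=
    (L.hasFDerivAt.comp x (hasFDerivAt_sub_const x)).const_add (f x)
  have hlower : HasFDerivAt (fun y ↦ f x + L (y - x) + φ ‖y - x‖) L x := by
    simpa only [add_zero] using hlin.fun_add (hasFDerivAt_comp_norm_sub hφ x)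
  have htouch : f x + L (x - x) + φ ‖x - x‖ = f x := by
    simp only [sub_self, map_zero, norm_zero, hφ0, add_zero]
  exact (hasFDerivAt_eq_of_eventuallyLE hlower hf hle htouch).symm

end NormedSpace

theorem hasDerivAt_eq_of_eventually_add_comp_abs_sub_le {f φ : ℝ → ℝ} {x f' C : ℝ}
    (hf : HasDerivAt f f' x) (hφ : HasDerivWithinAt φ 0 (Ici 0) 0) (hφ0 : φ 0 = 0)
    (hle : ∀ᶠ t in 𝓝 x, f x + C * (t - x) + φ |t - x| ≤ f t) :
    f' = C := by
  refine ContinuousLinearMap.toSpanSingleton_inj.mp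
    (hasFDerivAt_eq_of_eventually_add_comp_norm_sub_le hf.hasFDerivAt hφ hφ0 ?_)
  simpa only [ContinuousLinearMap.toSpanSingleton_apply, smul_eq_mul, Real.norm_eq_abs,
    mul_comm C] using hle

theorem superquadratic_deriv_is_constant_general {f : ℝ → ℝ} {x f' t : ℝ}
    (hf : Superquadratic f) (hf0 : f 0 = 0) (hderiv0 : HasDerivWithinAt f 0 (Ici 0) 0)
    (hx : 0 ≤ x) (hderiv : HasDerivWithinAt f f' (Ici 0) x) (ht : 0 ≤ t) :
    f x + f' * (t - x) + f |t - x| ≤ f t := by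
  rcases hx.eq_or_lt with rfl | hx_pos
  · have hf' : f' = 0 := (uniqueDiffOn_Ici 0 0 hx).eq_deriv _ hderiv hderiv0
    simp [hf0, hf', abs_of_nonneg ht]
  · obtain ⟨C, hC⟩ := hf x hx
    have hnhds : Ici 0 ∈ 𝓝 x := Ici_mem_nhds hx_pos
    have hf' : f' = C := hasDerivAt_eq_of_eventually_add_comp_abs_sub_le
      (hderiv.hasDerivAt hnhds) hderiv0 hf0 (mem_of_superset hnhds hC)
    exact hf' ▸ hC t ht

/-- If `f` is superquadratic, differentiable on `[0,∞)` (from the right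
at `0`), with `f(0) = 0` and `f′(0) = 0`, then the constant `C_x` can be taken to be
`f′(x)`: `f(t) ≥ f(x) + f′(x)(t − x) + f(|t − x|)` for all `t ≥ 0` and `x ≥ 0`. -/
theorem superquadratic_deriv_is_constant (f : ℝ → ℝ) (hf : Superquadratic f)
    (hdiff : ∀ x : ℝ, 0 ≤ x → DifferentiableWithinAt ℝ f (Set.Ici 0) x)
    (hf0 : f 0 = 0) (hf'0 : derivWithin f (Set.Ici 0) 0 = 0) :
    ∀ x : ℝ, 0 ≤ x → ∀ t : ℝ, 0 ≤ t →
      f x + derivWithin f (Set.Ici 0) x * (t - x) + f |t - x| ≤ f t := by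
  have hderiv0 := (hdiff 0 le_rfl).hasDerivWithinAt
  rw [hf'0] at hderiv0
  exact fun x hx t ht ↦
    superquadratic_deriv_is_constant_general hf hf0 hderiv0 hx (hdiff x hx).hasDerivWithinAt ht
end

section
/- Let f : [0,∞) → ℝ be a superquadratic function with f(x) ≥ 0 for all x ≥ 0. Then f is convex on [0,∞), f(0) = 0, and the (right) derivative of f at 0 exists and equals 0. -/
open Filter Set Topology

section SupportingMaps

variable {𝕜 E β : Type*} [Ring 𝕜] [PartialOrder 𝕜] [AddCommGroup E] [Module 𝕜 E]
  [AddCommGroup β] [PartialOrder β] [IsOrderedAddMonoid β] [Module 𝕜 β] [PosSMulMono 𝕜 β]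

theorem convexOn_of_forall_exists_linearMap_add_le {s : Set E} {f : E → β} (hs : Convex 𝕜 s)
    (h : ∀ x ∈ s, ∃ ℓ : E →ₗ[𝕜] β, ∀ y ∈ s, f x + ℓ (y - x) ≤ f y) : ConvexOn 𝕜 s f := by
  refine ⟨hs, fun x hx y hy a b ha hb hab ↦ ?_⟩
  obtain ⟨ℓ, hℓ⟩ := h _ (hs hx hy ha hb hab)
  set z := a • x + b • y with hz
  have barycenter : a • (x - z) + b • (y - z) = 0 := by
    rw [smul_sub, smul_sub, sub_add_sub_comm, ← add_smul, hab, one_smul, ← hz, sub_self]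
  calc
    f z = (a + b) • f z + ℓ (a • (x - z) + b • (y - z)) := by
      rw [hab, one_smul, barycenter, map_zero, add_zero]
    _ = a • (f z + ℓ (x - z)) + b • (f z + ℓ (y - z)) := by
      rw [map_add, map_smul, map_smul, add_smul, smul_add, smul_add, add_add_add_comm]
    _ ≤ a • f x + b • f y := by
      gcongr
      exacts [hℓ x hx, hℓ y hy]

end SupportingMaps

section RightDerivatives

variable {f g : ℝ → ℝ} {f' g' x a c : ℝ}

theorem differentiableWithinAt_Ioi_of_convexOn_of_bddBelow_slope {s : Set ℝ}
    (hf : ConvexOn ℝ s f) (hx : x ∈ s) (hs : s ∈ 𝓝[>] x)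
    (hbdd : BddBelow (slope f x '' {y ∈ s | x < y})) :
    DifferentiableWithinAt ℝ f (Ioi x) x := by
  obtain ⟨b, hxb, hbs⟩ := mem_nhdsGT_iff_exists_Ioo_subset.mp hs
  have hIoo : Ioo x b ⊆ {y ∈ s | x < y} := fun y hy ↦ ⟨hbs hy, hy.1⟩
  have hlim : Tendsto (slope f x) (𝓝[>] x) (𝓝 (sInf (slope f x '' Ioo x b))) :=
    ((hf.monotoneOn_slope_gt hx).mono hIoo).tendsto_nhdsWithin_Ioo_right (nonempty_Ioo.mpr hxb)
      (hbdd.mono (image_mono hIoo))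
  exact ((hasDerivWithinAt_iff_tendsto_slope' self_notMem_Ioi).mpr hlim).differentiableWithinAt

theorem le_of_hasDerivWithinAt_Ioi_of_eventuallyLE (hf : HasDerivWithinAt f f' (Ioi x) x)
    (hg : HasDerivWithinAt g g' (Ioi x) x) (hx : g x ≤ f x) (hfg : f ≤ᶠ[𝓝[>] x] g) :
    f' ≤ g' := by
  rw [hasDerivWithinAt_iff_tendsto_slope' self_notMem_Ioi] at hf hg
  refine le_of_tendsto_of_tendsto hf hg ?_
  filter_upwards [hfg, self_mem_nhdsWithin] with y hy hxy
  rw [slope_def_field, slope_def_field]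
  exact div_le_div_of_nonneg_right (sub_le_sub hy hx) (sub_nonneg.mpr (le_of_lt hxy))

theorem mul_le_mul_of_hasDerivWithinAt_Ioi_zero (hf : HasDerivWithinAt f f' (Ioi 0) 0)
    (hf₀ : f 0 = 0) (ha : 0 < a) (h : ∀ᶠ x in 𝓝[>] 0, c * f x ≤ f (a * x)) :
    c * f' ≤ a * f' := by
  have hscale : HasDerivWithinAt (fun x ↦ f (a * x)) (a * f') (Ioi 0) 0 := by
    rw [← smul_eq_mul, hasDerivWithinAt_comp_mul_left_smul_iff, LinearOrderedField.smul_Ioi ha,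
      mul_zero]
    exact hf
  exact le_of_hasDerivWithinAt_Ioi_of_eventuallyLE (hf.const_mul c) hscale (by simp [hf₀]) h

theorem hasDerivWithinAt_zero_of_convexOn_of_mul_le (hf : ConvexOn ℝ (Ici 0) f) (hf₀ : f 0 = 0)
    (hpos : ∀ x, 0 ≤ x → 0 ≤ f x) (ha : 0 < a) (hac : a < c)
    (h : ∀ᶠ x in 𝓝[>] 0, c * f x ≤ f (a * x)) : HasDerivWithinAt f 0 (Ici 0) 0 := by
  have hbdd : BddBelow (slope f 0 '' {y ∈ Ici 0 | 0 < y}) := by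
    refine ⟨0, forall_mem_image.mpr fun y hy ↦ ?_⟩
    rw [slope_nonneg_iff_of_le hy.1, hf₀]
    exact hpos y hy.1
  have hderiv := (differentiableWithinAt_Ioi_of_convexOn_of_bddBelow_slope hf self_mem_Ici
    (mem_of_superset self_mem_nhdsWithin Ioi_subset_Ici_self) hbdd).hasDerivWithinAt
  set f' := derivWithin f (Ioi 0) 0
  have hf'_nonneg : 0 ≤ f' :=
    le_of_hasDerivWithinAt_Ioi_of_eventuallyLE (hasDerivWithinAt_const 0 _ 0) hderiv hf₀.le
      (eventually_nhdsWithin_of_forall fun x hx ↦ hpos x (le_of_lt hx))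
  have hf'_mul_le : c * f' ≤ a * f' := mul_le_mul_of_hasDerivWithinAt_Ioi_zero hderiv hf₀ ha h
  have hf'_nonpos : f' ≤ 0 :=
    nonpos_of_mul_nonpos_right (by rwa [sub_mul, sub_nonpos]) (sub_pos.mpr hac)
  have hf'_eq_zero : f' = 0 := hf'_nonpos.antisymm hf'_nonneg
  exact hf'_eq_zero ▸ hderiv.Ici_of_Ioi

end RightDerivatives

namespace Superquadratic

variable {f : ℝ → ℝ} {x y : ℝ}

theorem map_zero_nonpos (hf : Superquadratic f) : f 0 ≤ 0 := by
  obtain ⟨C, hC⟩ := hf 0 le_rfl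
  simpa using hC 0 le_rfl

theorem two_mul_add_two_mul_le (hf : Superquadratic f) (hy : 0 ≤ y) (hyx : y ≤ x) :
    2 * f x + 2 * f y ≤ f (x + y) + f (x - y) := by
  obtain ⟨C, hC⟩ := hf x (hy.trans hyx)
  have hadd : f x + C * y + f y ≤ f (x + y) := by
    simpa [abs_of_nonneg hy] using hC (x + y) (by linarith)
  have hsub : f x - C * y + f y ≤ f (x - y) := by
    simpa [abs_of_nonneg hy, sub_eq_add_neg] using hC (x - y) (sub_nonneg.mpr hyx)
  linarith

theorem four_mul_le (hf : Superquadratic f) (hx : 0 ≤ x) : 4 * f x ≤ f (2 * x) := by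
  have h := hf.two_mul_add_two_mul_le hx le_rfl
  rw [sub_self, ← two_mul x] at h
  linarith [hf.map_zero_nonpos]

theorem convexOn (hf : Superquadratic f) (hpos : ∀ x, 0 ≤ x → 0 ≤ f x) :
    ConvexOn ℝ (Ici 0) f := by
  refine convexOn_of_forall_exists_linearMap_add_le (convex_Ici 0) fun x hx ↦ ?_
  obtain ⟨C, hC⟩ := hf x hx
  exact ⟨LinearMap.mulLeft ℝ C, fun t ht ↦
    (le_add_of_nonneg_right (hpos _ (abs_nonneg _))).trans (hC t ht)⟩

end Superquadratic

/-- If `f` is superquadratic and nonnegative on `[0,∞)`, then `f` is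
convex on `[0,∞)`, `f(0) = 0`, and the right derivative of `f` at `0` exists and is `0`. -/
theorem superquadratic_nonneg_convex (f : ℝ → ℝ) (hf : Superquadratic f)
    (hpos : ∀ x : ℝ, 0 ≤ x → 0 ≤ f x) :
    ConvexOn ℝ (Set.Ici 0) f ∧ f 0 = 0 ∧ HasDerivWithinAt f 0 (Set.Ici 0) 0 := by
  have hconv : ConvexOn ℝ (Ici 0) f := hf.convexOn hpos
  have hf₀ : f 0 = 0 := hf.map_zero_nonpos.antisymm (hpos 0 le_rfl)
  have hdouble : ∀ᶠ x in 𝓝[>] 0, 4 * f x ≤ f (2 * x) :=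
    eventually_nhdsWithin_of_forall fun x hx ↦ hf.four_mul_le (le_of_lt hx)
  exact ⟨hconv, hf₀,
    hasDerivWithinAt_zero_of_convexOn_of_mul_le hconv hf₀ hpos two_pos (by norm_num) hdouble⟩
end

section
/- Let f : [0,∞) → ℝ be differentiable on [0,∞) with f(0) = 0 and f′(0) = 0. If the derivative f′ is convex on [0,∞), then f is superquadratic; if f′ is concave on [0,∞), then f is subquadratic (i.e., −f is superquadratic). -/
/-!
The slope `C = f' x` works as soon as `f'` is superadditive on `[0,∞)`, as is every convex function
vanishing at `0`. In terms of the distance `u = |t - x|` the claim reads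
`f x + f' x * u + f u ≤ f (x + u)` to the right of `x` and `f x - f' x * u + f u ≤ f (x - u)` to
the left. Both hold at `u = 0`, and superadditivity of `f'` compares the derivatives in `u`,
since `x + u` is the sum of `x` and `u`, while `x` is the sum of `x - u` and `u`.
-/

open Set

theorem map_smul_le_smul_of_convexOn {𝕜 E β : Type*}
    [Ring 𝕜] [PartialOrder 𝕜] [IsOrderedAddMonoid 𝕜] [AddCommMonoid E] [Module 𝕜 E]
    [AddCommMonoid β] [PartialOrder β] [IsOrderedAddMonoid β] [Module 𝕜 β] [PosSMulMono 𝕜 β]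
    {s : Set E} {g : E → β} {a : E} {r : 𝕜} (hg : ConvexOn 𝕜 s g) (hs0 : 0 ∈ s) (hg0 : g 0 ≤ 0)
    (ha : a ∈ s) (hr0 : 0 ≤ r) (hr1 : r ≤ 1) : g (r • a) ≤ r • g a := by
  have hr1' : 0 ≤ 1 - r := sub_nonneg.2 hr1
  calc g (r • a) = g (r • a + (1 - r) • 0) := by rw [smul_zero, add_zero]
    _ ≤ r • g a + (1 - r) • g 0 := hg.2 ha hs0 hr0 hr1' (add_sub_cancel r 1)
    _ ≤ r • g a := add_le_of_nonpos_right (smul_nonpos_of_nonneg_of_nonpos hr1' hg0)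

theorem add_le_map_add_of_convexOn_Ici {𝕜 β : Type*}
    [Field 𝕜] [LinearOrder 𝕜] [IsStrictOrderedRing 𝕜]
    [AddCommMonoid β] [PartialOrder β] [IsOrderedAddMonoid β] [Module 𝕜 β] [PosSMulMono 𝕜 β]
    {g : 𝕜 → β} {a b : 𝕜} (hg : ConvexOn 𝕜 (Ici 0) g) (hg0 : g 0 ≤ 0)
    (ha : 0 ≤ a) (hb : 0 ≤ b) : g a + g b ≤ g (a + b) := by
  obtain hab | hab := (add_nonneg ha hb).eq_or_lt
  · obtain ⟨rfl, rfl⟩ := (add_eq_zero_iff_of_nonneg ha hb).1 hab.symm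
    simpa only [add_zero] using add_le_of_nonpos_right hg0
  · have le_smul {c : 𝕜} (hc0 : 0 ≤ c) (hc : c ≤ a + b) : g c ≤ (c / (a + b)) • g (a + b) := by
      simpa only [smul_eq_mul, div_mul_cancel₀ c hab.ne'] using
        map_smul_le_smul_of_convexOn hg self_mem_Ici hg0 hab.le
          (div_nonneg hc0 hab.le) (div_le_one_of_le₀ hc hab.le)
    calc g a + g b
        ≤ (a / (a + b)) • g (a + b) + (b / (a + b)) • g (a + b) :=
          add_le_add (le_smul ha (le_add_of_nonneg_right hb))
            (le_smul hb (le_add_of_nonneg_left ha))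
      _ = g (a + b) := by rw [← add_smul, ← add_div, div_self hab.ne', one_smul]

section Tangent

variable {f f' : ℝ → ℝ} {x u : ℝ}

theorem add_mul_add_le_of_add_deriv_le {F F' : ℝ → ℝ} {c : ℝ}
    (hf : ∀ v ∈ Ici (0 : ℝ), HasDerivWithinAt f (f' v) (Ici 0) v) (hf0 : f 0 ≤ 0)
    (hu : 0 ≤ u) (hFc : ContinuousOn F (Icc 0 u))
    (hF : ∀ v ∈ Ico 0 u, HasDerivWithinAt F (F' v) (Ici v) v)
    (hF' : ∀ v ∈ Ico 0 u, c + f' v ≤ F' v) : F 0 + c * u + f u ≤ F u := by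
  have hderiv : ∀ v ∈ Ici (0 : ℝ),
      HasDerivWithinAt (fun w => F 0 + c * w + f w) (c + f' v) (Ici 0) v := fun v hv =>
    (((hasDerivAt_const_mul c).const_add (F 0)).hasDerivWithinAt).add (hf v hv)
  have hcont : ContinuousOn (fun w => F 0 + c * w + f w) (Icc 0 u) := fun v hv =>
    (hderiv v hv.1).continuousWithinAt.mono Icc_subset_Ici_self
  have hinit : F 0 + c * 0 + f 0 ≤ F 0 := by linarith
  exact image_le_of_deriv_right_le_deriv_boundary hcont
    (fun v hv => (hderiv v hv.1).mono (Ici_subset_Ici.2 hv.1)) hinit hFc hF hF' ⟨hu, le_rfl⟩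

variable (hf : ∀ v ∈ Ici (0 : ℝ), HasDerivWithinAt f (f' v) (Ici 0) v) (hf0 : f 0 ≤ 0)
  (hadd : ∀ a ≥ 0, ∀ b ≥ 0, f' a + f' b ≤ f' (a + b))
include hf hf0 hadd

theorem add_deriv_mul_add_le_map_add (hx : 0 ≤ x) (hu : 0 ≤ u) :
    f x + f' x * u + f u ≤ f (x + u) := by
  have hderiv : ∀ v ∈ Ici (0 : ℝ),
      HasDerivWithinAt (fun w => f (x + w)) (f' (x + v)) (Ici 0) v := fun v hv => by
    simpa only [Function.comp_def, mul_one] using (hf (x + v) (add_nonneg hx hv)).comp v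
      ((hasDerivWithinAt_id v (Ici 0)).const_add x) fun w hw => add_nonneg hx hw
  simpa only [add_zero] using add_mul_add_le_of_add_deriv_le hf hf0 hu
    (fun v hv => (hderiv v hv.1).continuousWithinAt.mono Icc_subset_Ici_self)
    (fun v hv => (hderiv v hv.1).mono (Ici_subset_Ici.2 hv.1))
    (fun v hv => hadd x hx v hv.1)

theorem sub_deriv_mul_add_le_map_sub (hu : 0 ≤ u) (hux : u ≤ x) :
    f x - f' x * u + f u ≤ f (x - u) := by
  have hcont : ContinuousOn (fun w => f (x - w)) (Icc 0 u) :=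
    ContinuousOn.comp (fun v hv => (hf v hv).continuousWithinAt) (by fun_prop)
      fun w hw => sub_nonneg.2 (hw.2.trans hux)
  have hderiv : ∀ v ∈ Ico 0 u,
      HasDerivWithinAt (fun w => f (x - w)) (-f' (x - v)) (Ici v) v := fun v hv =>
    have hvx : 0 < x - v := sub_pos.2 (hv.2.trans_le hux)
    (((hf (x - v) hvx.le).hasDerivAt (Ici_mem_nhds hvx)).comp_const_sub x v).hasDerivWithinAt
  have hderiv_le : ∀ v ∈ Ico 0 u, -f' x + f' v ≤ -f' (x - v) := fun v hv => by
    have hsplit : f' (x - v) + f' v ≤ f' x := by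
      simpa only [sub_add_cancel] using hadd (x - v) (sub_nonneg.2 (hv.2.le.trans hux)) v hv.1
    linarith
  simpa only [sub_zero, neg_mul, ← sub_eq_add_neg] using
    add_mul_add_le_of_add_deriv_le hf hf0 hu hcont hderiv hderiv_le

end Tangent

theorem superquadratic_of_deriv_convex_general {f f' : ℝ → ℝ}
    (hf : ∀ v ∈ Ici (0 : ℝ), HasDerivWithinAt f (f' v) (Ici 0) v) (hf0 : f 0 ≤ 0)
    (hadd : ∀ a ≥ 0, ∀ b ≥ 0, f' a + f' b ≤ f' (a + b)) : Superquadratic f := by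
  intro x hx
  refine ⟨f' x, fun t ht => ?_⟩
  obtain hxt | htx := le_total x t
  · simpa only [abs_of_nonneg (sub_nonneg.2 hxt), add_sub_cancel] using
      add_deriv_mul_add_le_map_add hf hf0 hadd hx (sub_nonneg.2 hxt)
  · have htangent : f x - f' x * (x - t) + f (x - t) ≤ f t := by
      simpa only [sub_sub_cancel] using
        sub_deriv_mul_add_le_map_sub hf hf0 hadd (sub_nonneg.2 htx) (sub_le_self x ht)
    rw [abs_of_nonpos (sub_nonpos.2 htx), neg_sub]
    linarith

/-- Let `f` be differentiable on `[0,∞)` with derivative `f'`,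
`f(0) = 0` and `f′(0) = 0`. If `f′` is convex on `[0,∞)` then `f` is superquadratic;
if `f′` is concave on `[0,∞)` then `f` is subquadratic (i.e. `−f` is superquadratic). -/
theorem superquadratic_of_deriv_convex (f f' : ℝ → ℝ)
    (hdiff : ∀ x ∈ Set.Ici (0 : ℝ), HasDerivWithinAt f (f' x) (Set.Ici 0) x)
    (hf0 : f 0 = 0) (hf'0 : f' 0 = 0) :
    (ConvexOn ℝ (Set.Ici 0) f' → Superquadratic f) ∧
    (ConcaveOn ℝ (Set.Ici 0) f' → Superquadratic (-f)) := by
  have hnegdiff : ∀ x ∈ Ici (0 : ℝ), HasDerivWithinAt (-f) ((-f') x) (Ici 0) x :=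
    fun x hx => (hdiff x hx).neg
  exact ⟨fun hconvex => superquadratic_of_deriv_convex_general hdiff hf0.le
      fun _ ha _ hb => add_le_map_add_of_convexOn_Ici hconvex hf'0.le ha hb,
    fun hconcave => superquadratic_of_deriv_convex_general hnegdiff (neg_nonpos.2 hf0.ge)
      fun _ ha _ hb => add_le_map_add_of_convexOn_Ici hconcave.neg (neg_nonpos.2 hf'0.ge) ha hb⟩
end

section
/- Let I = [0,M] ⊆ [0,∞) and let f : I → ℝ be a continuous operator superquadratic function on I with f(x) ≥ 0 for all x ∈ I. Then f is operator convex on I, i.e., f(αA + (1−α)B) ≤ α f(A) + (1−α) f(B) for all α ∈ [0,1] and all positive bounded linear operators A, B with spectra in I, and moreover f(0) = 0. -/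
/-- The absolute value `|T| = (T*T)^{1/2}` of a bounded operator, via the continuous
functional calculus. -/
noncomputable def opAbs {H : Type*} [NormedAddCommGroup H] [InnerProductSpace ℂ H]
    [CompleteSpace H] (T : H →L[ℂ] H) : H →L[ℂ] H :=
  CFC.sqrt (star T * T)

/-- A continuous function `f : [0,M] → ℝ` is operator superquadratic if
`f(αA + (1−α)B) ≤ α[f(A) − f((1−α)|A−B|)] + (1−α)[f(B) − f(α|A−B|)]`
for all `α ∈ [0,1]` and all positive bounded linear operators `A, B` on a complex
Hilbert space with spectra contained in `[0,M]`. -/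
def OperatorSuperquadraticOn (M : ℝ) (f : ℝ → ℝ) : Prop :=
  ∀ (H : Type) [NormedAddCommGroup H] [InnerProductSpace ℂ H] [CompleteSpace H],
    ∀ A B : H →L[ℂ] H, 0 ≤ A → 0 ≤ B →
      spectrum ℝ A ⊆ Set.Icc 0 M → spectrum ℝ B ⊆ Set.Icc 0 M →
      ∀ α : ℝ, α ∈ Set.Icc (0 : ℝ) 1 →
        cfc f (α • A + (1 - α) • B) ≤
          α • (cfc f A - cfc f ((1 - α) • opAbs (A - B))) +
          (1 - α) • (cfc f B - cfc f (α • opAbs (A - B)))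

/-! The superquadratic inequality is the convexity inequality with `f ((1 - α) |A - B|)` and
`f (α |A - B|)` subtracted on the right. From `0 ≤ A, B ≤ M` it follows that `-M ≤ A - B ≤ M`, so
`(1 - α) |A - B|` and `α |A - B|` have spectra in `[0, M]`. There `f ≥ 0`, and dropping the two
corrections only weakens the bound. Taking `A = B = 0` and `α = 1` gives `f(0) ≤ f(0) - f(0)`,
so `f(0) ≤ 0`. -/

open Set

section SpectralBounds

variable {A : Type*} [TopologicalSpace A] [Ring A] [StarRing A] [Algebra ℝ A]
  [ContinuousFunctionalCalculus ℝ A IsSelfAdjoint]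

lemma spectrum_smul_subset_Icc {a : A} (ha : IsSelfAdjoint a) {c r : ℝ} (hc : c ∈ Icc 0 1)
    (har : spectrum ℝ a ⊆ Icc 0 r) : spectrum ℝ (c • a) ⊆ Icc 0 r := by
  rw [← cfc_const_mul_id c a, cfc_map_spectrum (c * ·) a]
  rintro _ ⟨x, hx, rfl⟩
  obtain ⟨hx_nonneg, hx_le⟩ := har hx
  exact ⟨mul_nonneg hc.1 hx_nonneg, (mul_le_of_le_one_left hx_nonneg hc.2).trans hx_le⟩

variable [PartialOrder A] [StarOrderedRing A] [NonnegSpectrumClass ℝ A]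

lemma spectrum_sub_subset_Icc {a b : A} {r s : ℝ} (ha : 0 ≤ a) (hb : 0 ≤ b)
    (har : spectrum ℝ a ⊆ Iic r) (hbs : spectrum ℝ b ⊆ Iic s) :
    spectrum ℝ (a - b) ⊆ Icc (-s) r := by
  have hab : IsSelfAdjoint (a - b) := (IsSelfAdjoint.of_nonneg ha).sub (.of_nonneg hb)
  have upper : a - b ≤ algebraMap ℝ A r :=
    (sub_le_self a hb).trans (le_algebraMap_of_spectrum_le har)
  have lower : algebraMap ℝ A (-s) ≤ a - b := by
    rw [map_neg, neg_le, neg_sub]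
    exact (sub_le_self b ha).trans (le_algebraMap_of_spectrum_le hbs)
  exact fun x hx ↦
    ⟨(algebraMap_le_iff_le_spectrum hab).mp lower x hx,
      (le_algebraMap_iff_spectrum_le hab).mp upper x hx⟩

variable [IsTopologicalRing A] [T2Space A]

lemma spectrum_abs_sub_subset_Icc {a b : A} {r : ℝ} (ha : 0 ≤ a) (hb : 0 ≤ b)
    (har : spectrum ℝ a ⊆ Iic r) (hbr : spectrum ℝ b ⊆ Iic r) :
    spectrum ℝ (CFC.abs (a - b)) ⊆ Icc 0 r := by
  have hab : IsSelfAdjoint (a - b) := (IsSelfAdjoint.of_nonneg ha).sub (.of_nonneg hb)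
  rw [CFC.spectrum_abs (𝕜 := ℝ) (a - b) hab]
  rintro _ ⟨x, hx, rfl⟩
  exact ⟨norm_nonneg x, abs_le.mpr (spectrum_sub_subset_Icc ha hb har hbr hx)⟩

lemma cfc_smul_abs_sub_nonneg {f : ℝ → ℝ} {a b : A} {c r : ℝ} (hf : ∀ x ∈ Icc 0 r, 0 ≤ f x)
    (ha : 0 ≤ a) (hb : 0 ≤ b) (har : spectrum ℝ a ⊆ Iic r) (hbr : spectrum ℝ b ⊆ Iic r)
    (hc : c ∈ Icc 0 1) : 0 ≤ cfc f (c • CFC.abs (a - b)) :=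
  cfc_nonneg fun x hx ↦ hf x <|
    spectrum_smul_subset_Icc (.of_nonneg (CFC.abs_nonneg _)) hc
      (spectrum_abs_sub_subset_Icc ha hb har hbr) hx

end SpectralBounds

lemma opAbs_eq_abs {H : Type*} [NormedAddCommGroup H] [InnerProductSpace ℂ H] [CompleteSpace H]
    (T : H →L[ℂ] H) : opAbs T = CFC.abs T :=
  rfl

/-- Operator convexity of `f` on `[0, M]`, tested, like `OperatorSuperquadraticOn`, on positive
operators whose spectra lie in `[0, M]`. -/
def OperatorConvexOn (M : ℝ) (f : ℝ → ℝ) : Prop :=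
  ∀ (H : Type) [NormedAddCommGroup H] [InnerProductSpace ℂ H] [CompleteSpace H],
    ∀ A B : H →L[ℂ] H, 0 ≤ A → 0 ≤ B →
      spectrum ℝ A ⊆ Icc 0 M → spectrum ℝ B ⊆ Icc 0 M →
      ∀ α : ℝ, α ∈ Icc (0 : ℝ) 1 →
        cfc f (α • A + (1 - α) • B) ≤ α • cfc f A + (1 - α) • cfc f B

namespace OperatorSuperquadraticOn

variable {M : ℝ} {f : ℝ → ℝ}

theorem operatorConvexOn (hf : OperatorSuperquadraticOn M f) (hpos : ∀ x ∈ Icc 0 M, 0 ≤ f x) :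
    OperatorConvexOn M f := by
  intro H _ _ _ A B hA hB hAM hBM α hα
  have correction_nonneg {c : ℝ} (hc : c ∈ Icc 0 1) : 0 ≤ cfc f (c • opAbs (A - B)) := by
    rw [opAbs_eq_abs]
    exact cfc_smul_abs_sub_nonneg hpos hA hB (hAM.trans Icc_subset_Iic_self)
      (hBM.trans Icc_subset_Iic_self) hc
  have hα' : 1 - α ∈ Icc 0 1 := Icc.one_sub_mem hα
  calc cfc f (α • A + (1 - α) • B)
    _ ≤ α • (cfc f A - cfc f ((1 - α) • opAbs (A - B))) +
          (1 - α) • (cfc f B - cfc f (α • opAbs (A - B))) := hf H A B hA hB hAM hBM α hα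
    _ ≤ α • cfc f A + (1 - α) • cfc f B :=
      add_le_add
        (smul_le_smul_of_nonneg_left (sub_le_self _ (correction_nonneg hα')) hα.1)
        (smul_le_smul_of_nonneg_left (sub_le_self _ (correction_nonneg hα)) hα'.1)

theorem apply_zero_nonpos (hf : OperatorSuperquadraticOn M f) (hM : 0 ≤ M) : f 0 ≤ 0 := by
  have spectrum_zero : spectrum ℝ (0 : ℂ →L[ℂ] ℂ) ⊆ Icc 0 M := by
    simpa only [spectrum.zero_eq, singleton_subset_iff, left_mem_Icc] using hM
  have cfc_nonpos : cfc f (0 : ℂ →L[ℂ] ℂ) ≤ 0 := by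
    simpa using
      hf ℂ 0 0 le_rfl le_rfl spectrum_zero spectrum_zero 1 (right_mem_Icc.mpr zero_le_one)
  rwa [cfc_apply_zero, ← map_zero (algebraMap ℝ (ℂ →L[ℂ] ℂ)), algebraMap_le_algebraMap]
    at cfc_nonpos

end OperatorSuperquadraticOn

/-- If `f` is continuous, operator superquadratic and nonnegative on
`I = [0,M]`, then `f` is operator convex on `I` and `f(0) = 0`. -/
theorem operatorSuperquadratic_nonneg_operatorConvex {M : ℝ} (hM : 0 ≤ M) (f : ℝ → ℝ)
    (hcont : ContinuousOn f (Set.Icc 0 M)) (hf : OperatorSuperquadraticOn M f)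
    (hpos : ∀ x ∈ Set.Icc (0 : ℝ) M, 0 ≤ f x) :
    (∀ (H : Type) [NormedAddCommGroup H] [InnerProductSpace ℂ H] [CompleteSpace H],
      ∀ A B : H →L[ℂ] H, 0 ≤ A → 0 ≤ B →
        spectrum ℝ A ⊆ Set.Icc 0 M → spectrum ℝ B ⊆ Set.Icc 0 M →
        ∀ α : ℝ, α ∈ Set.Icc (0 : ℝ) 1 →
          cfc f (α • A + (1 - α) • B) ≤ α • cfc f A + (1 - α) • cfc f B) ∧
    f 0 = 0 :=
  ⟨hf.operatorConvexOn hpos,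
    (hf.apply_zero_nonpos hM).antisymm (hpos 0 (left_mem_Icc.mpr hM))⟩
end

section
/- Let f : [0,∞) → ℝ be a continuous function that is operator concave and satisfies f(x) ≥ 0 for all x ≥ 0. Then f is operator subquadratic, in the sense that for all positive bounded linear operators A, B on a complex Hilbert space, (f(A) + f(B))/2 ≤ f((A+B)/2) + f(|A−B|/2). -/
open Set

lemma cfc_nonneg_of_nonneg_on_Ici {𝓐 : Type*} [Ring 𝓐] [StarRing 𝓐] [TopologicalSpace 𝓐]
    [Algebra ℝ 𝓐] [ContinuousFunctionalCalculus ℝ 𝓐 IsSelfAdjoint] [PartialOrder 𝓐]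
    [StarOrderedRing 𝓐] [NonnegSpectrumClass ℝ 𝓐] {f : ℝ → ℝ} (hf : ∀ x, 0 ≤ x → 0 ≤ f x)
    {a : 𝓐} (ha : 0 ≤ a) : 0 ≤ cfc f a :=
  cfc_nonneg fun x hx ↦ hf x (spectrum_nonneg_of_nonneg ha hx)

lemma concaveOn_of_forall_mem_Icc {𝕜 E β : Type*} [Ring 𝕜] [PartialOrder 𝕜] [IsOrderedAddMonoid 𝕜]
    [AddCommMonoid E] [AddCommMonoid β] [PartialOrder β] [SMul 𝕜 E] [SMul 𝕜 β]
    {s : Set E} {g : E → β} (hs : Convex 𝕜 s)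
    (hg : ∀ x y, x ∈ s → y ∈ s → ∀ α ∈ Icc (0 : 𝕜) 1,
      α • g x + (1 - α) • g y ≤ g (α • x + (1 - α) • y)) :
    ConcaveOn 𝕜 s g := by
  refine ⟨hs, fun x hx y hy α β hα hβ hαβ ↦ ?_⟩
  obtain rfl : β = 1 - α := eq_sub_of_add_eq' hαβ
  exact hg x y hx hy α ⟨hα, sub_nonneg.mp hβ⟩

theorem operatorConcave_nonneg_operatorSubquadratic_general {𝓐 : Type*} [CStarAlgebra 𝓐]
    [PartialOrder 𝓐] [StarOrderedRing 𝓐] {f : ℝ → ℝ}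
    (hconc : ConcaveOn ℝ (Ici 0) (cfc f : 𝓐 → 𝓐)) (hpos : ∀ x, 0 ≤ x → 0 ≤ f x)
    {a b : 𝓐} (ha : 0 ≤ a) (hb : 0 ≤ b) {s t : ℝ} (hs : 0 ≤ s) (ht : 0 ≤ t) (hst : s + t = 1) :
    s • cfc f a + t • cfc f b ≤ cfc f (s • a + t • b) +
      (s • cfc f (t • CFC.abs (a - b)) + t • cfc f (s • CFC.abs (a - b))) := by
  have correction_nonneg {r : ℝ} (hr : 0 ≤ r) : 0 ≤ cfc f (r • CFC.abs (a - b)) :=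
    cfc_nonneg_of_nonneg_on_Ici hpos (smul_nonneg hr (CFC.abs_nonneg _))
  calc
    s • cfc f a + t • cfc f b ≤ cfc f (s • a + t • b) := hconc.2 ha hb hs ht hst
    _ ≤ _ := le_add_of_nonneg_right <| add_nonneg
      (smul_nonneg hs (correction_nonneg ht)) (smul_nonneg ht (correction_nonneg hs))

/-- If `f : [0,∞) → ℝ` is continuous, operator concave and
nonnegative, then `f` is operator subquadratic in the midpoint sense:
`(f(A) + f(B))/2 ≤ f((A+B)/2) + f(|A−B|/2)` for all positive operators `A, B`. -/
theorem operatorConcave_nonneg_operatorSubquadratic (f : ℝ → ℝ)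
    (hcont : ContinuousOn f (Set.Ici 0))
    (hconc : ∀ (H : Type) [NormedAddCommGroup H] [InnerProductSpace ℂ H]
      [CompleteSpace H], ∀ A B : H →L[ℂ] H, 0 ≤ A → 0 ≤ B →
        ∀ α : ℝ, α ∈ Set.Icc (0 : ℝ) 1 →
          α • cfc f A + (1 - α) • cfc f B ≤ cfc f (α • A + (1 - α) • B))
    (hpos : ∀ x : ℝ, 0 ≤ x → 0 ≤ f x) :
    ∀ (H : Type) [NormedAddCommGroup H] [InnerProductSpace ℂ H] [CompleteSpace H],
      ∀ A B : H →L[ℂ] H, 0 ≤ A → 0 ≤ B →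
        (2 : ℝ)⁻¹ • (cfc f A + cfc f B) ≤
          cfc f ((2 : ℝ)⁻¹ • (A + B)) + cfc f ((2 : ℝ)⁻¹ • opAbs (A - B)) := by
  intro H _ _ _ A B hA hB
  have half_add_half : (2 : ℝ)⁻¹ + 2⁻¹ = 1 := by norm_num
  simpa only [opAbs_eq_abs, ← smul_add, Convex.combo_self half_add_half] using
    operatorConcave_nonneg_operatorSubquadratic_general
      (concaveOn_of_forall_mem_Icc (convex_Ici 0) (hconc H)) hpos hA hB
      (by positivity) (by positivity) half_add_half
end

section
/- Let r ∈ [0,1] and let A, B be positive bounded linear operators on a complex Hilbert space H. Then (A^r + B^r)/2 ≤ ((A+B)/2)^r + (|A−B|/2)^r, where powers are taken via the continuous functional calculus and |A−B| = ((A−B)*(A−B))^{1/2}. In particular, t ↦ t^r is operator subquadratic on [0,∞). -/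
section OperatorSubquadratic

variable {𝔄 : Type*} [CStarAlgebra 𝔄] [PartialOrder 𝔄] [StarOrderedRing 𝔄] {f : ℝ → ℝ}

variable (𝔄 f) in
/-- A continuous function `f` on `[0, ∞)` is operator subquadratic over the C⋆-algebra `𝔄` if `-f`
satisfies the operator superquadratic inequality at all positive elements of `𝔄`. The weights
`α` and `1 - α` of the superquadratic inequality are written symmetrically as `α` and `β`. -/
structure IsOperatorSubquadratic : Prop where
  continuousOn : ContinuousOn f (Set.Ici 0)
  le : ∀ ⦃a b : 𝔄⦄, 0 ≤ a → 0 ≤ b → ∀ ⦃α β : ℝ⦄, 0 ≤ α → 0 ≤ β → α + β = 1 →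
    α • cfc f a + β • cfc f b ≤
      cfc f (α • a + β • b) +
        (α • cfc f (β • CFC.abs (a - b)) + β • cfc f (α • CFC.abs (a - b)))

theorem concaveOn_cfc_rpow {r : ℝ} (hr : r ∈ Set.Icc (0 : ℝ) 1) :
    ConcaveOn ℝ (Set.Ici 0) (cfc (fun t : ℝ => t ^ r) : 𝔄 → 𝔄) :=
  (CFC.concaveOn_rpow hr).congr fun _ ha => CFC.rpow_eq_cfc_real ha

namespace IsOperatorSubquadratic

theorem of_concaveOn_cfc (hf : ContinuousOn f (Set.Ici 0)) (hf_nonneg : ∀ t, 0 ≤ t → 0 ≤ f t)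
    (hf_concave : ConcaveOn ℝ (Set.Ici 0) (cfc f : 𝔄 → 𝔄)) : IsOperatorSubquadratic 𝔄 f where
  continuousOn := hf
  le a b ha hb α β hα hβ hαβ := by
    have cfc_smul_abs_nonneg {c : ℝ} (hc : 0 ≤ c) : 0 ≤ cfc f (c • CFC.abs (a - b)) :=
      cfc_nonneg fun t ht =>
        hf_nonneg t (spectrum_nonneg_of_nonneg (smul_nonneg hc (CFC.abs_nonneg _)) ht)
    calc α • cfc f a + β • cfc f b
        ≤ cfc f (α • a + β • b) := hf_concave.2 ha hb hα hβ hαβ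
      _ ≤ cfc f (α • a + β • b) +
          (α • cfc f (β • CFC.abs (a - b)) + β • cfc f (α • CFC.abs (a - b))) :=
        le_add_of_nonneg_right <| add_nonneg (smul_nonneg hα (cfc_smul_abs_nonneg hβ))
          (smul_nonneg hβ (cfc_smul_abs_nonneg hα))

theorem midpoint_le (hf : IsOperatorSubquadratic 𝔄 f) {a b : 𝔄} (ha : 0 ≤ a) (hb : 0 ≤ b) :
    (2 : ℝ)⁻¹ • (cfc f a + cfc f b) ≤
      cfc f ((2 : ℝ)⁻¹ • (a + b)) + cfc f ((2 : ℝ)⁻¹ • CFC.abs (a - b)) := by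
  have half_nonneg : (0 : ℝ) ≤ 2⁻¹ := by norm_num
  have half_add_half : (2 : ℝ)⁻¹ + 2⁻¹ = 1 := by norm_num
  have h := hf.le ha hb half_nonneg half_nonneg half_add_half
  rwa [← add_smul, half_add_half, one_smul, ← smul_add, ← smul_add] at h

end IsOperatorSubquadratic

theorem rpow_operatorSubquadratic_general {r : ℝ} (hr : r ∈ Set.Icc (0 : ℝ) 1) :
    IsOperatorSubquadratic 𝔄 (fun t : ℝ => t ^ r) :=
  .of_concaveOn_cfc (Real.continuous_rpow_const hr.1).continuousOn
    (fun _ ht => Real.rpow_nonneg ht r) (concaveOn_cfc_rpow hr)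

end OperatorSubquadratic

/-- For `r ∈ [0,1]` and positive bounded operators `A, B` on a
complex Hilbert space, `(A^r + B^r)/2 ≤ ((A+B)/2)^r + (|A−B|/2)^r`; in particular
`t ↦ t^r` is operator subquadratic on `[0,∞)`. -/
theorem rpow_operatorSubquadratic (H : Type*) [NormedAddCommGroup H]
    [InnerProductSpace ℂ H] [CompleteSpace H] (r : ℝ) (hr : r ∈ Set.Icc (0 : ℝ) 1)
    (A B : H →L[ℂ] H) (hA : 0 ≤ A) (hB : 0 ≤ B) :
    (2 : ℝ)⁻¹ • (cfc (fun t : ℝ => t ^ r) A + cfc (fun t : ℝ => t ^ r) B) ≤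
      cfc (fun t : ℝ => t ^ r) ((2 : ℝ)⁻¹ • (A + B)) +
        cfc (fun t : ℝ => t ^ r) ((2 : ℝ)⁻¹ • opAbs (A - B)) :=
  -- `opAbs (A - B)` unfolds to `CFC.abs (A - B)`, so no rewriting is needed.
  (rpow_operatorSubquadratic_general hr).midpoint_le hA hB
end

section
/- Let I = [0,M] ⊆ [0,∞) and let f : I → ℝ be continuous. Suppose that for every complex Hilbert space K, every pair of positive bounded linear operators A₁, A₂ on K with spectra contained in I, and every pair of orthogonal projections P₁, P₂ on K with P₁ + P₂ = 1_K, one has f(P₁A₁P₁ + P₂A₂P₂) ≤ P₁ f(A₁) P₁ + P₂ f(A₂) P₂ − P₁ f(|A₁ − (P₁A₁P₁ + P₂A₂P₂)|) P₁ − P₂ f(|A₂ − (P₁A₁P₁ + P₂A₂P₂)|) P₂. Then f is operator superquadratic on I. -/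
/-!
Let `V, W : H → K` be isometries with `K = V H ⊕ W H`, and rotate them to `V' = cV + sW` and
`W' = cW - sV`, where `c² = α` and `s² = 1 - α`. For `T = V'AV'* + W'BW'*` the compression `V*TV`
is `C = αA + (1 - α)B`, while the operator `VCV* + WCW* = V'CV'* + W'CW'*` does not see the
rotation. Apply the projection inequality to `A₁ = T`, `A₂ = VCV* + WCW*`, `P₁ = VV*`, `P₂ = WW*`.
Then `P₁A₁P₁ + P₂A₂P₂ = A₂`, and `A₁ - A₂ = V'(A - C)V'* + W'(B - C)W'*` with
`A - C = (1 - α)(A - B)` and `B - C = α(B - A)`. The compression of the inequality by `V` is the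
superquadratic inequality; the term with `A₂` is killed since `P₂V = 0`.
-/

section CStarAlgebra

variable {A B C : Type*} [CStarAlgebra A] [CStarAlgebra B] [CStarAlgebra C]

lemma spectrum_starAlgHom_prod_subset (φ : A × B →⋆ₐ[ℂ] C) (a : A) (b : B) :
    spectrum ℝ (φ (a, b)) ⊆ spectrum ℝ a ∪ spectrum ℝ b := by
  rw [← Prod.spectrum_eq]
  exact AlgHom.spectrum_apply_subset (φ.restrictScalars ℝ) (a, b)

variable [PartialOrder A] [StarOrderedRing A]

lemma spectrum_subset_Icc_iff {a : A} (ha : IsSelfAdjoint a) {m M : ℝ} :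
    spectrum ℝ a ⊆ Set.Icc m M ↔ a ∈ Set.Icc (algebraMap ℝ A m) (algebraMap ℝ A M) := by
  rw [Set.mem_Icc, algebraMap_le_iff_le_spectrum ha, le_algebraMap_iff_spectrum_le ha]
  exact forall₂_and

lemma spectrum_cfcAbs_sub_subset_Icc {a b : A} {m M : ℝ} (ha : IsSelfAdjoint a)
    (hb : IsSelfAdjoint b) (hma : spectrum ℝ a ⊆ Set.Icc m M) (hmb : spectrum ℝ b ⊆ Set.Icc m M) :
    spectrum ℝ (CFC.abs (a - b)) ⊆ Set.Icc 0 (M - m) := by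
  rw [spectrum_subset_Icc_iff ha] at hma
  rw [spectrum_subset_Icc_iff hb] at hmb
  have hab : spectrum ℝ (a - b) ⊆ Set.Icc (m - M) (M - m) := by
    rw [spectrum_subset_Icc_iff (ha.sub hb), map_sub, map_sub]
    exact ⟨sub_le_sub hma.1 hmb.2, sub_le_sub hma.2 hmb.1⟩
  rw [CFC.spectrum_abs (𝕜 := ℝ) (a - b) (ha.sub hb)]
  rintro _ ⟨x, hx, rfl⟩
  exact ⟨norm_nonneg x, abs_le.2 ⟨by linarith [(hab hx).1], (hab hx).2⟩⟩

lemma cfcAbs_sub_comm (a b : A) : CFC.abs (a - b) = CFC.abs (b - a) := by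
  rw [← neg_sub, CFC.abs_neg]

lemma cfcAbs_sub_convexCombination_left (a b : A) {t : ℝ} (ht : t ≤ 1) :
    CFC.abs (a - (t • a + (1 - t) • b)) = (1 - t) • CFC.abs (a - b) := by
  rw [show a - (t • a + (1 - t) • b) = (1 - t) • (a - b) by module, CFC.abs_smul,
    Real.norm_of_nonneg (sub_nonneg.2 ht)]

lemma cfcAbs_sub_convexCombination_right (a b : A) {t : ℝ} (ht : 0 ≤ t) :
    CFC.abs (b - (t • a + (1 - t) • b)) = t • CFC.abs (a - b) := by
  rw [show b - (t • a + (1 - t) • b) = t • (b - a) by module, CFC.abs_smul,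
    Real.norm_of_nonneg ht, cfcAbs_sub_comm]

variable [PartialOrder B] [StarOrderedRing B] [PartialOrder C] [StarOrderedRing C]

lemma cfc_starAlgHom_prod (φ : A × B →⋆ₐ[ℂ] C) (f : ℝ → ℝ) {a : A} {b : B}
    (ha : IsSelfAdjoint a) (hb : IsSelfAdjoint b)
    (hf : ContinuousOn f (spectrum ℝ a ∪ spectrum ℝ b)) :
    cfc f (φ (a, b)) = φ (cfc f a, cfc f b) := by
  have : ContinuousFunctionalCalculus ℝ (A × B) IsSelfAdjoint :=
    IsSelfAdjoint.instContinuousFunctionalCalculus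
  have hab : IsSelfAdjoint (a, b) := Prod.ext ha hb
  rw [← cfc_map_prod (S := ℂ) f a b hf hab ha hb]
  exact (StarAlgHomClass.map_cfc (S := ℂ) φ f (a, b) (by rwa [Prod.spectrum_eq])
    (map_continuous φ) hab (hab.map φ)).symm

lemma cfcAbs_starAlgHom_prod (φ : A × B →⋆ₐ[ℂ] C) (a : A) (b : B) :
    CFC.abs (φ (a, b)) = φ (CFC.abs a, CFC.abs b) := by
  refine CFC.sqrt_unique ?_ (map_nonneg φ ⟨CFC.abs_nonneg a, CFC.abs_nonneg b⟩)
  rw [← map_mul, ← map_star, ← map_mul]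
  exact congr_arg φ (Prod.ext (CFC.abs_mul_abs a) (CFC.abs_mul_abs b))

end CStarAlgebra

section OrthogonalSum

open ContinuousLinearMap

variable {𝕜 E F K : Type*} [RCLike 𝕜] [NormedAddCommGroup E] [InnerProductSpace 𝕜 E]
  [NormedAddCommGroup F] [InnerProductSpace 𝕜 F] [NormedAddCommGroup K] [InnerProductSpace 𝕜 K]
  [CompleteSpace E] [CompleteSpace F] [CompleteSpace K]

/-- `V` and `W` are isometries that present `K` as the Hilbert sum `E ⊕ F`; the coordinate
projections are `V V*` and `W W*`. -/
structure IsOrthogonalSum (V : E →L[𝕜] K) (W : F →L[𝕜] K) : Prop where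
  adjoint_left_left (x : E) : adjoint V (V x) = x
  adjoint_right_right (y : F) : adjoint W (W y) = y
  left_add_right (z : K) : V (adjoint V z) + W (adjoint W z) = z

lemma adjoint_ofReal_smul (c : ℝ) (V : E →L[𝕜] K) :
    adjoint ((c : 𝕜) • V) = (c : 𝕜) • adjoint V := by
  rw [map_smulₛₗ, RCLike.conj_ofReal]

/-- The compression `V* T V` of `T` along `V`. -/
noncomputable def compression (V : E →L[𝕜] K) : (K →L[𝕜] K) →ₗ[𝕜] (E →L[𝕜] E) where
  toFun T := adjoint V ∘L T ∘L V
  map_add' _ _ := by ext; simp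
  map_smul' _ _ := by ext; simp

@[simp]
lemma compression_apply_apply (V : E →L[𝕜] K) (T : K →L[𝕜] K) (x : E) :
    compression V T x = adjoint V (T (V x)) := rfl

lemma compression_mono (V : E →L[𝕜] K) : Monotone (compression V) := by
  intro S T hST
  rw [le_def] at hST ⊢
  rw [← map_sub]
  exact hST.adjoint_conj V

namespace IsOrthogonalSum

variable {V : E →L[𝕜] K} {W : F →L[𝕜] K}

lemma symm (h : IsOrthogonalSum V W) : IsOrthogonalSum W V where
  adjoint_left_left := h.adjoint_right_right
  adjoint_right_right := h.adjoint_left_left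
  left_add_right z := by rw [add_comm, h.left_add_right]

lemma adjoint_right_left (h : IsOrthogonalSum V W) (x : E) : adjoint W (V x) = 0 := by
  have hx := h.left_add_right (V x)
  rw [h.adjoint_left_left, add_eq_left] at hx
  rw [← h.adjoint_right_right (adjoint W (V x)), hx, map_zero]

lemma adjoint_left_right (h : IsOrthogonalSum V W) (y : F) : adjoint V (W y) = 0 :=
  h.symm.adjoint_right_left y

/-- The block-diagonal operators `S ⊕ T` on `K = E ⊕ F`, as a star homomorphism in `(S, T)`. -/
noncomputable def blockDiag (h : IsOrthogonalSum V W) :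
    (E →L[𝕜] E) × (F →L[𝕜] F) →⋆ₐ[𝕜] (K →L[𝕜] K) where
  toFun T := V ∘L T.1 ∘L adjoint V + W ∘L T.2 ∘L adjoint W
  map_one' := ext h.left_add_right
  map_mul' S T := by
    ext
    simp [h.adjoint_left_left, h.adjoint_right_right, h.adjoint_left_right, h.adjoint_right_left]
  map_zero' := by simp
  map_add' S T := by
    ext
    simp [add_add_add_comm]
  commutes' r := by
    ext z
    simp [ContinuousLinearMap.algebraMap_apply, ← smul_add, h.left_add_right]
  map_star' T := by
    simp only [star_eq_adjoint, map_add, adjoint_comp, adjoint_adjoint, comp_assoc, Prod.fst_star,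
      Prod.snd_star]

lemma blockDiag_apply_apply (h : IsOrthogonalSum V W) (T : (E →L[𝕜] E) × (F →L[𝕜] F)) (z : K) :
    h.blockDiag T z = V (T.1 (adjoint V z)) + W (T.2 (adjoint W z)) := rfl

lemma compression_blockDiag (h : IsOrthogonalSum V W) (S : E →L[𝕜] E) (T : F →L[𝕜] F) :
    compression V (h.blockDiag (S, T)) = S := by
  ext
  simp [blockDiag_apply_apply, h.adjoint_left_left, h.adjoint_left_right]

lemma blockDiag_one_zero_mul_mul (h : IsOrthogonalSum V W) (T : K →L[𝕜] K) :
    h.blockDiag (1, 0) * T * h.blockDiag (1, 0) = h.blockDiag (compression V T, 0) := by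
  ext
  simp [blockDiag_apply_apply]

lemma compression_blockDiag_zero_one_mul_mul (h : IsOrthogonalSum V W) (S T : K →L[𝕜] K) :
    compression V (h.blockDiag (0, 1) * S * T) = 0 := by
  ext
  simp [blockDiag_apply_apply, h.adjoint_left_right]

lemma isStarProjection_blockDiag_one_zero (h : IsOrthogonalSum V W) :
    IsStarProjection (h.blockDiag (1, 0)) :=
  IsStarProjection.map ⟨Prod.ext (one_mul 1) (zero_mul 0), Prod.ext (star_one _) (star_zero _)⟩ _

lemma isStarProjection_blockDiag_zero_one (h : IsOrthogonalSum V W) :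
    IsStarProjection (h.blockDiag (0, 1)) :=
  IsStarProjection.map ⟨Prod.ext (zero_mul 0) (one_mul 1), Prod.ext (star_zero _) (star_one _)⟩ _

lemma blockDiag_one_zero_add_blockDiag_zero_one (h : IsOrthogonalSum V W) :
    h.blockDiag (1, 0) + h.blockDiag (0, 1) = 1 := by
  rw [← map_add, Prod.mk_add_mk, add_zero, zero_add, ← Prod.one_eq_mk, map_one]

variable {W : E →L[𝕜] K}

lemma rotate (h : IsOrthogonalSum V W) {c s : ℝ} (hcs : c ^ 2 + s ^ 2 = 1) :
    IsOrthogonalSum ((c : 𝕜) • V + (s : 𝕜) • W) ((c : 𝕜) • W - (s : 𝕜) • V) := by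
  have hcs' : (c : 𝕜) ^ 2 + (s : 𝕜) ^ 2 = 1 := mod_cast hcs
  refine ⟨fun x => ?_, fun y => ?_, fun z => ?_⟩
  · simp only [map_add, adjoint_ofReal_smul, add_apply, smul_apply, map_smul, h.adjoint_left_left,
      h.adjoint_left_right, h.adjoint_right_left, h.adjoint_right_right]
    linear_combination (norm := module) hcs' • x
  · simp only [map_sub, adjoint_ofReal_smul, sub_apply, smul_apply, map_smul, h.adjoint_left_left,
      h.adjoint_left_right, h.adjoint_right_left, h.adjoint_right_right]
    linear_combination (norm := module) hcs' • y
  · simp only [map_add, map_sub, adjoint_ofReal_smul, add_apply, sub_apply, smul_apply, map_smul]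
    linear_combination (norm := module)
      hcs' • (V (adjoint V z) + W (adjoint W z)) + h.left_add_right z

lemma compression_blockDiag_rotate (h : IsOrthogonalSum V W) {c s : ℝ} (hcs : c ^ 2 + s ^ 2 = 1)
    (S T : E →L[𝕜] E) :
    compression V ((h.rotate hcs).blockDiag (S, T)) = (c ^ 2 : 𝕜) • S + (s ^ 2 : 𝕜) • T := by
  ext
  simp only [compression_apply_apply, blockDiag_apply_apply, map_add, map_sub, adjoint_ofReal_smul,
    add_apply, sub_apply, smul_apply, map_smul, h.adjoint_left_left, h.adjoint_left_right,
    h.adjoint_right_left, map_zero]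
  module

lemma blockDiag_rotate_diag (h : IsOrthogonalSum V W) {c s : ℝ} (hcs : c ^ 2 + s ^ 2 = 1)
    (T : E →L[𝕜] E) : (h.rotate hcs).blockDiag (T, T) = h.blockDiag (T, T) := by
  have hcs' : (c : 𝕜) ^ 2 + (s : 𝕜) ^ 2 = 1 := mod_cast hcs
  ext z
  simp only [blockDiag_apply_apply, map_add, map_sub, adjoint_ofReal_smul, add_apply, sub_apply,
    smul_apply, map_smul]
  linear_combination (norm := module) hcs' • (V (T (adjoint V z)) + W (T (adjoint W z)))

end IsOrthogonalSum

open WithLp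

lemma adjoint_fstL_apply (x : E) : adjoint (fstL 2 𝕜 E F) x = toLp 2 (x, 0) := by
  refine ext_inner_right 𝕜 fun y => ?_
  simp [adjoint_inner_left]

lemma adjoint_sndL_apply (y : F) : adjoint (sndL 2 𝕜 E F) y = toLp 2 (0, y) := by
  refine ext_inner_right 𝕜 fun x => ?_
  simp [adjoint_inner_left]

variable (𝕜 E F) in
lemma isOrthogonalSum_adjoint_fstL_sndL :
    IsOrthogonalSum (adjoint (fstL 2 𝕜 E F)) (adjoint (sndL 2 𝕜 E F)) where
  adjoint_left_left x := by simp [adjoint_fstL_apply]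
  adjoint_right_right y := by simp [adjoint_sndL_apply]
  left_add_right z := by
    simp [adjoint_fstL_apply, adjoint_sndL_apply, ← toLp_add, ← ofLp_fst, ← ofLp_snd]

end OrthogonalSum

section Jensen

open ContinuousLinearMap Set

variable {E F K : Type*} [NormedAddCommGroup E] [InnerProductSpace ℂ E] [CompleteSpace E]
  [NormedAddCommGroup F] [InnerProductSpace ℂ F] [CompleteSpace F]
  [NormedAddCommGroup K] [InnerProductSpace ℂ K] [CompleteSpace K]

lemma spectrum_compression_subset_Icc {V : E →L[ℂ] K} (hV : ∀ x, adjoint V (V x) = x)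
    {T : K →L[ℂ] K} (hT : IsSelfAdjoint T) {m M : ℝ} (hmM : spectrum ℝ T ⊆ Icc m M) :
    spectrum ℝ (compression V T) ⊆ Icc m M := by
  have halg (r : ℝ) : compression V (algebraMap ℝ (K →L[ℂ] K) r) = algebraMap ℝ (E →L[ℂ] E) r := by
    ext
    simp [ContinuousLinearMap.algebraMap_apply, hV]
  have hVT : IsSelfAdjoint (compression V T) := hT.adjoint_conj V
  rw [spectrum_subset_Icc_iff hT] at hmM
  rw [spectrum_subset_Icc_iff hVT, ← halg, ← halg]
  exact ⟨compression_mono V hmM.1, compression_mono V hmM.2⟩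

lemma opAbs_eq_cfcAbs (T : K →L[ℂ] K) : opAbs T = CFC.abs T := rfl

/-- The two-projection Jensen inequality for `f` on `[0, M]`, for operators on the single Hilbert
space `K`. -/
def ProjectionJensenOn (M : ℝ) (f : ℝ → ℝ) (K : Type*) [NormedAddCommGroup K]
    [InnerProductSpace ℂ K] [CompleteSpace K] : Prop :=
  ∀ A₁ A₂ P₁ P₂ : K →L[ℂ] K, 0 ≤ A₁ → 0 ≤ A₂ →
    spectrum ℝ A₁ ⊆ Icc 0 M → spectrum ℝ A₂ ⊆ Icc 0 M →
    IsSelfAdjoint P₁ → IsIdempotentElem P₁ →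
    IsSelfAdjoint P₂ → IsIdempotentElem P₂ → P₁ + P₂ = 1 →
    cfc f (P₁ * A₁ * P₁ + P₂ * A₂ * P₂) ≤
      P₁ * cfc f A₁ * P₁ + P₂ * cfc f A₂ * P₂
        - P₁ * cfc f (opAbs (A₁ - (P₁ * A₁ * P₁ + P₂ * A₂ * P₂))) * P₁
        - P₂ * cfc f (opAbs (A₂ - (P₁ * A₁ * P₁ + P₂ * A₂ * P₂))) * P₂

namespace IsOrthogonalSum

variable {V : E →L[ℂ] K} {W : F →L[ℂ] K} {M : ℝ} {f : ℝ → ℝ}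

lemma cfc_compression_le (h : IsOrthogonalSum V W) (hJ : ProjectionJensenOn M f K)
    (hf : ContinuousOn f (Icc 0 M)) {T : K →L[ℂ] K} {B : F →L[ℂ] F}
    (hT : 0 ≤ T) (hTM : spectrum ℝ T ⊆ Icc 0 M) (hB : 0 ≤ B) (hBM : spectrum ℝ B ⊆ Icc 0 M) :
    cfc f (compression V T) ≤ compression V (cfc f T) -
      compression V (cfc f (CFC.abs (T - h.blockDiag (compression V T, B)))) := by
  have hC : 0 ≤ compression V T := by simpa only [map_zero] using compression_mono V hT
  have hCM := spectrum_compression_subset_Icc h.adjoint_left_left (.of_nonneg hT) hTM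
  have hCB : spectrum ℝ (compression V T) ∪ spectrum ℝ B ⊆ Icc 0 M := union_subset hCM hBM
  have hP := h.isStarProjection_blockDiag_one_zero
  have hQ := h.isStarProjection_blockDiag_zero_one
  have hD : 0 ≤ h.blockDiag (compression V T, B) :=
    map_nonneg h.blockDiag (Prod.mk_le_mk.2 ⟨hC, hB⟩)
  have hS : h.blockDiag (1, 0) * T * h.blockDiag (1, 0) +
      h.blockDiag (0, 1) * h.blockDiag (compression V T, B) * h.blockDiag (0, 1) =
        h.blockDiag (compression V T, B) := by
    rw [h.blockDiag_one_zero_mul_mul, ← map_mul, ← map_mul, ← map_add]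
    simp
  have hjensen := hJ T (h.blockDiag (compression V T, B)) _ _ hT hD hTM
    ((spectrum_starAlgHom_prod_subset _ _ _).trans hCB) hP.isSelfAdjoint hP.isIdempotentElem
    hQ.isSelfAdjoint hQ.isIdempotentElem h.blockDiag_one_zero_add_blockDiag_zero_one
  rw [hS, cfc_starAlgHom_prod _ f (.of_nonneg hC) (.of_nonneg hB) (hf.mono hCB)] at hjensen
  simpa only [map_add, map_sub, compression_blockDiag, blockDiag_one_zero_mul_mul,
    compression_blockDiag_zero_one_mul_mul, add_zero, sub_zero, opAbs_eq_cfcAbs]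
    using compression_mono V hjensen

lemma cfcAbs_blockDiag_rotate_sub {W : E →L[ℂ] K} (h : IsOrthogonalSum V W) {c s : ℝ}
    (hcs : c ^ 2 + s ^ 2 = 1) (A B C : E →L[ℂ] E) :
    CFC.abs ((h.rotate hcs).blockDiag (A, B) - h.blockDiag (C, C)) =
      (h.rotate hcs).blockDiag (CFC.abs (A - C), CFC.abs (B - C)) := by
  rw [← h.blockDiag_rotate_diag hcs, ← map_sub, Prod.mk_sub_mk, cfcAbs_starAlgHom_prod]

end IsOrthogonalSum

theorem operatorSuperquadratic_of_projection_jensen_general {V W : E →L[ℂ] K}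
    (h : IsOrthogonalSum V W) {M : ℝ} {f : ℝ → ℝ} (hf : ContinuousOn f (Icc 0 M))
    (hJ : ProjectionJensenOn M f K) {A B : E →L[ℂ] E} (hA : 0 ≤ A) (hB : 0 ≤ B)
    (hAM : spectrum ℝ A ⊆ Icc 0 M) (hBM : spectrum ℝ B ⊆ Icc 0 M) {α : ℝ} (hα : α ∈ Icc 0 1) :
    cfc f (α • A + (1 - α) • B) ≤
      α • (cfc f A - cfc f ((1 - α) • opAbs (A - B))) +
        (1 - α) • (cfc f B - cfc f (α • opAbs (A - B))) := by
  have hc : √α ^ 2 = α := Real.sq_sqrt hα.1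
  have hs : √(1 - α) ^ 2 = 1 - α := Real.sq_sqrt (sub_nonneg.2 hα.2)
  have hcs : √α ^ 2 + √(1 - α) ^ 2 = 1 := by rw [hc, hs, add_sub_cancel]
  let φ := (h.rotate hcs).blockDiag
  have hcompress (S T : E →L[ℂ] E) : compression V (φ (S, T)) = α • S + (1 - α) • T := by
    rw [h.compression_blockDiag_rotate hcs]
    simp only [← RCLike.ofReal_pow, hc, hs, ← RCLike.real_smul_eq_coe_smul]
  have hT : 0 ≤ φ (A, B) := map_nonneg φ (Prod.mk_le_mk.2 ⟨hA, hB⟩)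
  have hTM : spectrum ℝ (φ (A, B)) ⊆ Icc 0 M :=
    (spectrum_starAlgHom_prod_subset φ A B).trans (union_subset hAM hBM)
  have hC : 0 ≤ α • A + (1 - α) • B := by
    simpa only [map_zero, hcompress] using compression_mono V hT
  have hCM : spectrum ℝ (α • A + (1 - α) • B) ⊆ Icc 0 M :=
    hcompress A B ▸ spectrum_compression_subset_Icc h.adjoint_left_left (.of_nonneg hT) hTM
  have hspec {D : E →L[ℂ] E} (hD : 0 ≤ D) (hDM : spectrum ℝ D ⊆ Icc 0 M) :
      spectrum ℝ (CFC.abs (D - (α • A + (1 - α) • B))) ⊆ Icc 0 M := by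
    simpa only [sub_zero] using
      spectrum_cfcAbs_sub_subset_Icc (.of_nonneg hD) (.of_nonneg hC) hDM hCM
  have hjensen := h.cfc_compression_le hJ hf hT hTM hC hCM
  rw [hcompress, h.cfcAbs_blockDiag_rotate_sub hcs,
    cfc_starAlgHom_prod φ f (.of_nonneg hA) (.of_nonneg hB) (hf.mono (union_subset hAM hBM)),
    cfc_starAlgHom_prod φ f (CFC.abs_nonneg _).isSelfAdjoint (CFC.abs_nonneg _).isSelfAdjoint
      (hf.mono (union_subset (hspec hA hAM) (hspec hB hBM))), hcompress, hcompress,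
    cfcAbs_sub_convexCombination_left A B hα.2,
    cfcAbs_sub_convexCombination_right A B hα.1] at hjensen
  refine hjensen.trans_eq ?_
  rw [opAbs_eq_cfcAbs]
  module

end Jensen

/-- If the two-projection Jensen inequality
`f(P₁A₁P₁ + P₂A₂P₂) ≤ P₁f(A₁)P₁ + P₂f(A₂)P₂ − P₁f(|A₁ − S|)P₁ − P₂f(|A₂ − S|)P₂`
(where `S = P₁A₁P₁ + P₂A₂P₂`) holds on every complex Hilbert space for all positive
`A₁, A₂` with spectra in `[0,M]` and all projections `P₁, P₂` with `P₁ + P₂ = 1`,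
then `f` is operator superquadratic on `[0,M]`. -/
theorem operatorSuperquadratic_of_projection_jensen {M : ℝ} (f : ℝ → ℝ)
    (hcont : ContinuousOn f (Set.Icc 0 M))
    (h : ∀ (K : Type) [NormedAddCommGroup K] [InnerProductSpace ℂ K] [CompleteSpace K],
      ∀ A₁ A₂ P₁ P₂ : K →L[ℂ] K, 0 ≤ A₁ → 0 ≤ A₂ →
        spectrum ℝ A₁ ⊆ Set.Icc 0 M → spectrum ℝ A₂ ⊆ Set.Icc 0 M →
        IsSelfAdjoint P₁ → IsIdempotentElem P₁ →
        IsSelfAdjoint P₂ → IsIdempotentElem P₂ → P₁ + P₂ = 1 →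
        cfc f (P₁ * A₁ * P₁ + P₂ * A₂ * P₂) ≤
          P₁ * cfc f A₁ * P₁ + P₂ * cfc f A₂ * P₂
            - P₁ * cfc f (opAbs (A₁ - (P₁ * A₁ * P₁ + P₂ * A₂ * P₂))) * P₁
            - P₂ * cfc f (opAbs (A₂ - (P₁ * A₁ * P₁ + P₂ * A₂ * P₂))) * P₂) :
    OperatorSuperquadraticOn M f :=
  fun H _ _ _ _ _ hA hB hAM hBM _ hα =>
    operatorSuperquadratic_of_projection_jensen_general (isOrthogonalSum_adjoint_fstL_sndL ℂ H H)
      hcont (h (WithLp 2 (H × H))) hA hB hAM hBM hα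
end
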